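/- Let a, b, c, d ∈ ℝ with d > 0, 1 + a + b + c > 0, d² = 1 + 2abc − a² − b² − c², |a|,|b|,|c| < 1, and define Ω = 2π − arg((bc − a + id)(ac − b + id)(ab − c + id)). Then tan(Ω/2) = d/(1 + a + b + c). -/

import Mathlib

open Real Complex

/-!
Write `P` for the product and `w = 1 + a + b + c - i d`. The Gram relation says that `i d` is a
square root of `a² + b² + c² - 1 - 2abc`, and modulo this relation `2P = (1 - a)(1 - b)(1 - c) w²`.
As `a`, `b`, `c` are less than `1`, the product `P` has the argument of `w²`, whose half is the
argument of `w` up to a multiple of `π`. The tangent does not see this multiple, so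
`tan (Ω / 2) = tan (π - arg P / 2) = -im w / re w`.
-/

theorem two_mul_prod_eq_prod_one_sub_mul_sq {R : Type*} [CommRing R] {a b c e : R}
    (he : e ^ 2 = a ^ 2 + b ^ 2 + c ^ 2 - 1 - 2 * a * b * c) :
    2 * ((b * c - a + e) * (a * c - b + e) * (a * b - c + e)) =
      (1 - a) * (1 - b) * (1 - c) * (1 + a + b + c - e) ^ 2 := by
  linear_combination
    (2 * e + 2 * ((b * c - a) + (a * c - b) + (a * b - c)) - (1 - a) * (1 - b) * (1 - c)) * he

theorem arg_prod_eq_arg_sq {a b c d : ℝ} (ha : a < 1) (hb : b < 1) (hc : c < 1)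
    (hgram : d ^ 2 = 1 + 2 * a * b * c - a ^ 2 - b ^ 2 - c ^ 2) :
    (((b * c - a : ℂ) + d * I) * ((a * c - b : ℂ) + d * I) * ((a * b - c : ℂ) + d * I)).arg =
      ((1 + a + b + c - d * I : ℂ) ^ 2).arg := by
  have hpos : 0 < (1 - a) * (1 - b) * (1 - c) :=
    mul_pos (mul_pos (sub_pos.2 ha) (sub_pos.2 hb)) (sub_pos.2 hc)
  have he : (d * I : ℂ) ^ 2 = a ^ 2 + b ^ 2 + c ^ 2 - 1 - 2 * a * b * c := by
    have hgram' : (d : ℂ) ^ 2 = 1 + 2 * a * b * c - a ^ 2 - b ^ 2 - c ^ 2 := mod_cast hgram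
    rw [mul_pow, I_sq, hgram']
    ring
  rw [← arg_real_mul _ two_pos, ← arg_real_mul ((1 + a + b + c - d * I : ℂ) ^ 2) hpos]
  push_cast
  rw [two_mul_prod_eq_prod_one_sub_mul_sq he]

theorem tan_half_arg_sq (w : ℂ) : Real.tan ((w ^ 2).arg / 2) = w.im / w.re := by
  have hdouble :
      (2 : ℕ) • (((w ^ 2).arg / 2 : ℝ) : Real.Angle) = (2 : ℕ) • (w.arg : Real.Angle) := by
    rw [Real.Angle.two_nsmul_coe_div_two, arg_pow_coe_angle]
  rw [← tan_arg, ← Real.Angle.tan_coe, ← Real.Angle.tan_coe w.arg]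
  rcases Real.Angle.two_nsmul_eq_iff.1 hdouble with h | h
  · rw [h]
  · rw [h, Real.Angle.tan_add_pi]

theorem tan_half_solid_angle_triangle_general {a b c d Ω : ℝ}
    (ha : a < 1) (hb : b < 1) (hc : c < 1) (_hsum : 1 + a + b + c ≠ 0)
    (hgram : d ^ 2 = 1 + 2 * a * b * c - a ^ 2 - b ^ 2 - c ^ 2)
    (hΩ : Ω = 2 * π - (((b * c - a : ℂ) + d * I) * ((a * c - b : ℂ) + d * I)
      * ((a * b - c : ℂ) + d * I)).arg) :
    Real.tan (Ω / 2) = d / (1 + a + b + c) := by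
  let w : ℂ := 1 + a + b + c - d * I
  have hre : w.re = 1 + a + b + c := by simp [w]
  have him : w.im = -d := by simp [w]
  have hhalf : Ω / 2 = π - (w ^ 2).arg / 2 := by
    rw [hΩ, arg_prod_eq_arg_sq ha hb hc hgram]
    ring
  rw [hhalf, Real.tan_pi_sub, tan_half_arg_sq, hre, him, neg_div, neg_neg]

/-- Van Oosterom–Strackee formula via the product representation:
if `Ω = 2π - arg((bc-a+id)(ac-b+id)(ab-c+id))` then `tan(Ω/2) = d/(1+a+b+c)`. -/
theorem tan_half_solid_angle_triangle (a b c d Ω : ℝ)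
    (hd : 0 < d) (hsum : 0 < 1 + a + b + c)
    (hgram : d ^ 2 = 1 + 2 * a * b * c - a ^ 2 - b ^ 2 - c ^ 2)
    (ha : |a| < 1) (hb : |b| < 1) (hc : |c| < 1)
    (hΩ : Ω = 2 * π - (((b * c - a : ℂ) + d * I) * ((a * c - b : ℂ) + d * I)
      * ((a * b - c : ℂ) + d * I)).arg) :
    Real.tan (Ω / 2) = d / (1 + a + b + c) :=
  tan_half_solid_angle_triangle_general (lt_of_abs_lt ha) (lt_of_abs_lt hb) (lt_of_abs_lt hc)
    hsum.ne' hgram hΩ
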